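/- arXiv:2112.05064 — 3 statements merged into one kernel-verified Lean document; each statement's English description precedes it below -/
import Mathlib

section
/- For every integer j ≥ 0, Σ_{t=0}^{j} H_t/(j+1−t) = (2/(j+1)!) · ⟦j+2, 3⟧ = H_{j+1}^2 − H_{j+1}^{[2]}, where H_t is the t-th harmonic number and H_t^{[2]} = Σ_{s=1}^{t} 1/s^2. -/
/-- The `r`-Stirling numbers of the first kind `⟦n,k⟧_r`: `⟦r,r⟧_r = 1`,
`⟦n,k⟧_r = 0` if `n < r` or `k < r`, and
`⟦n,k⟧_r = (n-1)·⟦n-1,k⟧_r + ⟦n-1,k-1⟧_r` for `n > r`. -/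
def rStirling1 (r : ℕ) : ℕ → ℕ → ℕ
  | 0, k => if r = 0 ∧ k = 0 then 1 else 0
  | (n+1), k =>
    if n + 1 < r ∨ k < r then 0
    else if n + 1 = r then (if k = r then 1 else 0)
    else if k = 0 then 0
    else n * rStirling1 r n k + rStirling1 r n (k - 1)

/-- The (unsigned) Stirling numbers of the first kind. -/
def stirling1 : ℕ → ℕ → ℕ := rStirling1 0

/-- `H_n^{[2]} = ∑_{s=1}^n 1/s²`. -/
def harmonicSq (n : ℕ) : ℚ := ∑ s ∈ Finset.Icc 1 n, 1 / (s : ℚ) ^ 2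

theorem stirling1_rec (n k : ℕ) :
    stirling1 (n + 1) (k + 1) = n * stirling1 n (k + 1) + stirling1 n k := by
  simp [stirling1, rStirling1]

theorem stirling1_succ_zero (n : ℕ) : stirling1 (n + 1) 0 = 0 := by
  simp [stirling1, rStirling1]

theorem harmonicSq_succ (n : ℕ) :
    harmonicSq (n + 1) = harmonicSq n + 1 / ((n : ℚ) + 1) ^ 2 := by
  unfold harmonicSq
  rw [Finset.sum_Icc_succ_top (by omega)]
  push_cast
  rfl

theorem stirling1_one (n : ℕ) : (stirling1 (n + 1) 1 : ℚ) = n.factorial := by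
  induction n with
  | zero => simp [stirling1, rStirling1]
  | succ n ih =>
    rw [stirling1_rec, stirling1_succ_zero, Nat.factorial_succ]
    push_cast
    rw [ih]
    ring

theorem stirling1_two (n : ℕ) :
    (stirling1 (n + 1) 2 : ℚ) = n.factorial * harmonic n := by
  induction n with
  | zero => simp [stirling1, rStirling1]
  | succ n ih =>
    rw [stirling1_rec, Nat.factorial_succ, harmonic_succ]
    push_cast
    rw [ih, stirling1_one]
    have : (n : ℚ) + 1 ≠ 0 := by positivity
    field_simp

theorem stirling1_three (n : ℕ) :
    2 * (stirling1 (n + 1) 3 : ℚ) = n.factorial * (harmonic n ^ 2 - harmonicSq n) := by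
  induction n with
  | zero => simp [stirling1, rStirling1, harmonicSq]
  | succ n ih =>
    rw [stirling1_rec, Nat.factorial_succ, harmonic_succ, harmonicSq_succ]
    push_cast
    rw [mul_add, mul_left_comm, ih, stirling1_two]
    have : (n : ℚ) + 1 ≠ 0 := by positivity
    field_simp
    ring

theorem sum_inv_reflect (n : ℕ) :
    ∑ s ∈ Finset.range n, 1 / ((n : ℚ) - s) = harmonic n := by
  unfold harmonic
  rw [← Finset.sum_range_reflect]
  refine Finset.sum_congr rfl fun s hs => ?_
  have hs := Finset.mem_range.mp hs
  have h : ((n - 1 - s : ℕ) : ℚ) = n - 1 - s := by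
    rw [Nat.cast_sub (by omega), Nat.cast_sub (by omega)]
    simp
  rw [h, one_div]
  push_cast
  congr 1
  ring

theorem conv_eq (n : ℕ) :
    ∑ t ∈ Finset.range n, harmonic t / ((n : ℚ) - t) = harmonic n ^ 2 - harmonicSq n := by
  induction n with
  | zero => simp [harmonicSq]
  | succ n ih =>
    have hn : (n : ℚ) + 1 ≠ 0 := by positivity
    have key : ∀ s ∈ Finset.range n,
        harmonic (s + 1) / (((n + 1 : ℕ) : ℚ) - ((s + 1 : ℕ) : ℚ)) =
          harmonic s / ((n : ℚ) - s) +
            1 / ((n : ℚ) + 1) * (((s + 1 : ℕ) : ℚ)⁻¹ + 1 / ((n : ℚ) - s)) := by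
      intro s hs
      have hlt : (s : ℚ) < n := by exact_mod_cast Finset.mem_range.mp hs
      have h1 : (n : ℚ) - s ≠ 0 := by linarith
      have h2 : (s : ℚ) + 1 ≠ 0 := by positivity
      have h3 : (n : ℚ) + 1 - (s + 1) = n - s := by ring
      rw [harmonic_succ]
      push_cast
      rw [h3]
      field_simp
      ring
    rw [Finset.sum_range_succ', Finset.sum_congr rfl key, Finset.sum_add_distrib,
      ← Finset.mul_sum, Finset.sum_add_distrib, sum_inv_reflect, ih, harmonicSq_succ,
      harmonic_succ]
    have h : ∑ i ∈ Finset.range n, (((i + 1 : ℕ) : ℚ))⁻¹ = harmonic n := rfl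
    rw [h]
    simp only [harmonic_zero, zero_div]
    push_cast
    field_simp
    ring

theorem stmt8 (j : ℕ) :
    (∑ t ∈ Finset.range (j + 1), harmonic t / (j + 1 - t) =
        (2 / (j + 1).factorial) * stirling1 (j + 2) 3) ∧
      (2 / (j + 1).factorial : ℚ) * stirling1 (j + 2) 3 =
        harmonic (j + 1) ^ 2 - harmonicSq (j + 1) := by
  have h2 : (2 / (j + 1).factorial : ℚ) * stirling1 (j + 2) 3 =
        harmonic (j + 1) ^ 2 - harmonicSq (j + 1) := by
    have hf : ((j + 1).factorial : ℚ) ≠ 0 := by exact_mod_cast Nat.factorial_ne_zero _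
    rw [div_mul_eq_mul_div, stirling1_three (j + 1), mul_div_cancel_left₀ _ hf]
  refine ⟨?_, h2⟩
  rw [h2, ← conv_eq]
  push_cast
  rfl
end

section
/- For all integers k ≥ 0 and r ≥ 0, the Bernoulli polynomial evaluated at r satisfies B_k(r) = (−1)^k · Σ_{j=0}^{k} ((−1)^j/(j+1)) · {k+1, j+1} · ⟦j+r+1, r+1⟧_r, where {n,k} denotes the Stirling number of the second kind. -/
/-- The Stirling numbers of the second kind. -/
def stirling2 : ℕ → ℕ → ℕ
  | 0, k => if k = 0 then 1 else 0
  | (_+1), 0 => 0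
  | (n+1), (k+1) => (k+1) * stirling2 n (k+1) + stirling2 n k

theorem rS_self (r k : ℕ) : rStirling1 r r k = if k = r then 1 else 0 := by
  cases r with
  | zero => simp [rStirling1]
  | succ r =>
    simp only [rStirling1]
    split_ifs <;> first | rfl | omega

theorem rS_lt (r n k : ℕ) (h : k < r) : rStirling1 r n k = 0 := by
  cases n with
  | zero =>
    simp only [rStirling1]
    rw [if_neg (by omega)]
  | succ n =>
    simp only [rStirling1]
    rw [if_pos (Or.inr h)]

theorem rS_bot (r n : ℕ) : (rStirling1 r (n + r) r : ℚ) = (ascPochhammer ℚ n).eval (r : ℚ) := by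
  induction n with
  | zero => simp [rS_self]
  | succ n ih =>
    have h : rStirling1 r (n + 1 + r) r = (n + r) * rStirling1 r (n + r) r := by
      rw [show n + 1 + r = (n + r) + 1 by omega, rStirling1]
      rw [if_neg (by omega), if_neg (by omega)]
      by_cases h0 : r = 0
      · rw [if_pos h0]
        subst h0
        cases n with
        | zero => simp
        | succ n => simp [rStirling1]
      · rw [if_neg h0, rS_lt r (n + r) (r - 1) (by omega), add_zero]
    rw [h, ascPochhammer_succ_right]
    simp [ih]
    ring

theorem rS_one (r n : ℕ) : (rStirling1 r (n + r) (r + 1) : ℚ) =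
    (Polynomial.derivative (ascPochhammer ℚ n)).eval (r : ℚ) := by
  induction n with
  | zero => simp [rS_self]
  | succ n ih =>
    have h : rStirling1 r (n + 1 + r) (r + 1) =
        (n + r) * rStirling1 r (n + r) (r + 1) + rStirling1 r (n + r) r := by
      rw [show n + 1 + r = (n + r) + 1 by omega, rStirling1]
      rw [if_neg (by omega), if_neg (by omega), if_neg (by omega), Nat.add_sub_cancel]
    rw [h, ascPochhammer_succ_right]
    simp [ih, rS_bot]
    ring

theorem s2_lt (n k : ℕ) (h : n < k) : stirling2 n k = 0 := by
  induction n generalizing k with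
  | zero => simp [stirling2]; omega
  | succ n ih =>
    cases k with
    | zero => omega
    | succ k => simp [stirling2, ih (k + 1) (by omega), ih k (by omega)]

theorem s2_sum (k : ℕ) (x : ℚ) :
    ∑ j ∈ Finset.range (k + 1), (-1 : ℚ) ^ j * stirling2 (k + 1) (j + 1) *
      (ascPochhammer ℚ j).eval (x + 1) = (-1) ^ k * x ^ k := by
  induction k with
  | zero => simp [stirling2]
  | succ k ih =>
    have h1 : ∀ j, (stirling2 (k + 1 + 1) (j + 1) : ℚ) =
        (j + 1) * stirling2 (k + 1) (j + 1) + stirling2 (k + 1) j := by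
      intro j
      rw [stirling2]; push_cast; ring
    simp only [h1, mul_add, add_mul, Finset.sum_add_distrib]
    rw [Finset.sum_range_succ, s2_lt (k + 1) (k + 1 + 1) (by omega)]
    rw [Finset.sum_range_succ' (fun j => (-1 : ℚ) ^ j * stirling2 (k + 1) j *
      (ascPochhammer ℚ j).eval (x + 1))]
    have h0 : stirling2 (k + 1) 0 = 0 := by simp [stirling2]
    rw [Finset.sum_range_succ (fun j => (-1 : ℚ) ^ j * (1 * (stirling2 (k + 1) (j + 1) : ℚ)) *
      (ascPochhammer ℚ j).eval (x + 1)), s2_lt (k + 1) (k + 1 + 1) (by omega)] <;> skip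
    rw [h0]
    simp only [Nat.cast_zero, mul_zero, zero_mul, add_zero]
    rw [← Finset.sum_add_distrib, pow_succ, pow_succ,
      show (-1 : ℚ) ^ k * -1 * (x ^ k * x) = (-x) * ((-1) ^ k * x ^ k) by ring, ← ih,
      Finset.mul_sum, ← Finset.sum_add_distrib]
    refine Finset.sum_congr rfl fun j _ => ?_
    rw [ascPochhammer_succ_right]
    simp
    ring

theorem asc_diff (n : ℕ) (x : ℚ) : (ascPochhammer ℚ (n + 1)).eval (x + 1) -
    (ascPochhammer ℚ (n + 1)).eval x = (n + 1) * (ascPochhammer ℚ n).eval (x + 1) := by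
  rw [ascPochhammer_succ_right]
  conv_lhs => rw [← ascPochhammer_succ_right, ascPochhammer_succ_right]
  have h2 : (ascPochhammer ℚ (n + 1)).eval x = x * (ascPochhammer ℚ n).eval (x + 1) := by
    rw [ascPochhammer_succ_left]; simp
  rw [← ascPochhammer_succ_right, h2, ascPochhammer_succ_right]
  simp
  ring

open Polynomial in
theorem stmt10 (k r : ℕ) :
    (Polynomial.bernoulli k).eval (r : ℚ) =
      (-1) ^ k * ∑ j ∈ Finset.range (k + 1),
        ((-1 : ℚ) ^ j / (j + 1)) * stirling2 (k + 1) (j + 1) *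
          rStirling1 r (j + r + 1) (r + 1) := by
  set F : ℚ[X] := ∑ j ∈ Finset.range (k + 1),
    C (((-1 : ℚ) ^ j / (j + 1)) * stirling2 (k + 1) (j + 1)) * ascPochhammer ℚ (j + 1) with hF
  have hd : ∀ x : ℚ, F.eval (x + 1) - F.eval x = (-1) ^ k * x ^ k := by
    intro x
    rw [← s2_sum, hF, eval_finsetSum, eval_finsetSum, ← Finset.sum_sub_distrib]
    refine Finset.sum_congr rfl fun j _ => ?_
    rw [eval_C_mul, eval_C_mul, ← mul_sub, asc_diff]
    have : (j + 1 : ℚ) ≠ 0 := by positivity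
    field_simp
  have hk : (k + 1 : ℚ) ≠ 0 := by positivity
  have hG : C ((-1 : ℚ) ^ k * (k + 1)) * F = Polynomial.bernoulli (k + 1) +
      C (((-1 : ℚ) ^ k * (k + 1)) * F.eval 0 - (Polynomial.bernoulli (k + 1)).eval 0) := by
    have hn : ∀ n : ℕ, (C ((-1 : ℚ) ^ k * (k + 1)) * F).eval (n : ℚ) =
        (Polynomial.bernoulli (k + 1) +
      C (((-1 : ℚ) ^ k * (k + 1)) * F.eval 0 - (Polynomial.bernoulli (k + 1)).eval 0)).eval
        (n : ℚ) := by
      intro n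
      induction n with
      | zero => simp
      | succ n ih =>
        have hb := bernoulli_eval_one_add (k + 1) (n : ℚ)
        have h1 := hd n
        simp only [eval_add, eval_mul, eval_C] at ih ⊢
        push_cast at hb ⊢
        rw [add_comm (n : ℚ) 1] at h1 ⊢
        rw [hb, eq_add_of_sub_eq h1, mul_add, ih]
        have : ((-1 : ℚ) ^ k) * (-1) ^ k = 1 := by rw [← mul_pow]; simp
        linear_combination ((k + 1) * (n : ℚ) ^ k) * this
    refine eq_of_infinite_eval_eq _ _ (Set.Infinite.mono ?_
      (Set.infinite_range_of_injective (Nat.cast_injective (R := ℚ))))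
    rintro _ ⟨n, rfl⟩
    exact hn n
  have hD := congrArg (fun p => (derivative p).eval (r : ℚ)) hG
  simp only [derivative_C_mul, derivative_add, derivative_C, add_zero,
    derivative_bernoulli_add_one, eval_C_mul] at hD
  have hS : (derivative F).eval (r : ℚ) = ∑ j ∈ Finset.range (k + 1),
        ((-1 : ℚ) ^ j / (j + 1)) * stirling2 (k + 1) (j + 1) *
          rStirling1 r (j + r + 1) (r + 1) := by
    rw [hF, derivative_sum, eval_finsetSum]
    refine Finset.sum_congr rfl fun j _ => ?_
    rw [derivative_C_mul, eval_C_mul, ← rS_one, show j + 1 + r = j + r + 1 by omega]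
  rw [← hS]
  simp at hD
  apply mul_left_cancel₀ hk
  linear_combination -hD
end

section
/- For all integers m ≥ 0 and r, s ≥ 0 with r + s ≤ m + 1, Σ_{k=r}^{m+1−s} (r! · s!/(k! · (m+1−k)!)) · ⟦k, r⟧ · ⟦m+1−k, s⟧ = ((r+s)!/(m+1)!) · ⟦m+1, r+s⟧, as an identity of rational numbers. -/
theorem st_succ (n k : ℕ) : stirling1 (n+1) (k+1) = n * stirling1 n (k+1) + stirling1 n k := by
  simp [stirling1, rStirling1]

theorem st_lt (n : ℕ) : ∀ k, n < k → stirling1 n k = 0 := by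
  induction n with
  | zero => intro k hk; simp [stirling1, rStirling1]; omega
  | succ n ih =>
    intro k hk
    obtain ⟨k, rfl⟩ : ∃ j, k = j + 1 := ⟨k - 1, by omega⟩
    rw [st_succ, ih _ (by omega), ih _ (by omega)]; simp

/-- Generating function of `r! / n! * ⟦n, r⟧`. -/
noncomputable def stF (r : ℕ) : PowerSeries ℚ :=
  PowerSeries.mk fun n => (r.factorial : ℚ) / n.factorial * stirling1 n r

theorem stF_zero : stF 0 = 1 := by
  ext n
  cases n <;> simp [stF, stirling1, rStirling1, PowerSeries.coeff_one]

theorem stF_deriv (r : ℕ) : (1 - PowerSeries.X) * PowerSeries.derivative ℚ (stF (r+1))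
    = ((r : PowerSeries ℚ) + 1) * stF r := by
  have hc : ((r : PowerSeries ℚ) + 1) = PowerSeries.C ((r : ℚ) + 1) := by simp
  rw [hc]
  ext n
  rw [sub_mul, one_mul, map_sub, PowerSeries.coeff_C_mul]
  have h0 : (n.factorial : ℚ) ≠ 0 := by positivity
  have h1 : (n : ℚ) + 1 ≠ 0 := by positivity
  cases n with
  | zero =>
    simp [stF, PowerSeries.coeff_derivative, st_succ, Nat.factorial_succ]
    ring
  | succ n =>
    have h2 : (n : ℚ) + 1 ≠ 0 := by positivity
    have h3 : (n.factorial : ℚ) ≠ 0 := by positivity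
    have h4 : (n : ℚ) + 1 + 1 ≠ 0 := by positivity
    rw [PowerSeries.coeff_succ_X_mul]
    simp only [stF, PowerSeries.coeff_derivative, PowerSeries.coeff_mk]
    rw [st_succ (n+1) r]
    simp only [Nat.factorial_succ]
    push_cast
    field_simp
    ring

theorem stF_const (r : ℕ) : PowerSeries.constantCoeff (stF (r+1)) = 0 := by
  rw [← PowerSeries.coeff_zero_eq_constantCoeff_apply]
  simp [stF, st_lt]

theorem stF_pow (r : ℕ) : stF r = stF 1 ^ r := by
  induction r with
  | zero => simp [stF_zero]
  | succ r ih =>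
    apply PowerSeries.derivative.ext
    · have h1 : (1 - PowerSeries.X : PowerSeries ℚ) ≠ 0 := by
        intro h
        have := congrArg PowerSeries.constantCoeff h
        simp at this
      apply mul_left_cancel₀ h1
      have h2 := stF_deriv 0
      rw [stF_deriv, Derivation.leibniz_pow, ih]
      simp only [stF_zero, zero_add, Nat.cast_zero, mul_one] at h2
      simp only [nsmul_eq_mul, smul_eq_mul, Nat.add_sub_cancel]
      push_cast
      linear_combination (-((r : PowerSeries ℚ) + 1) * stF 1 ^ r) * h2
    · rw [map_pow, stF_const, stF_const 0]; simp

theorem stmt12 (m r s : ℕ) (h : r + s ≤ m + 1) :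
    ∑ k ∈ Finset.Icc r (m + 1 - s),
        ((r.factorial * s.factorial : ℚ) / (k.factorial * (m + 1 - k).factorial)) *
          stirling1 k r * stirling1 (m + 1 - k) s =
      ((r + s).factorial / (m + 1).factorial : ℚ) * stirling1 (m + 1) (r + s) := by
  have key : stF r * stF s = stF (r + s) := by
    rw [stF_pow r, stF_pow s, stF_pow (r+s), pow_add]
  have h2 := congrArg (PowerSeries.coeff (m+1)) key
  rw [PowerSeries.coeff_mul, Finset.Nat.sum_antidiagonal_eq_sum_range_succ_mk] at h2
  simp only [stF, PowerSeries.coeff_mk] at h2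
  rw [← h2]
  have hsub : Finset.Icc r (m + 1 - s) ⊆ Finset.range (m + 1).succ := by
    intro k hk
    simp only [Finset.mem_Icc, Finset.mem_range] at *
    omega
  rw [← Finset.sum_subset hsub]
  · apply Finset.sum_congr rfl
    intro k _
    rw [mul_div_mul_comm]; ring
  · intro k hk hk'
    simp only [Finset.mem_Icc, Finset.mem_range] at *
    by_cases hr : k < r
    · simp [st_lt k r hr]
    · simp [st_lt (m + 1 - k) s (by omega)]
end
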